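/- For k < 2n − 1, the natural inclusion SO(2n−1)/U(n−1) → SO(2n+1)/U(n) induces an isomorphism on homotopy groups π_k. -/

import Mathlib

noncomputable section

/-- The realification of a complex `k × k` matrix, as a real `(k·2) × (k·2)` matrix
(each complex entry `a + bi` becomes the `2 × 2` block `[[a, -b], [b, a]]`); this realizes
the standard inclusion `U(k) ⊂ SO(2k)`. -/
def realify {k : ℕ} (A : Matrix (Fin k) (Fin k) ℂ) :
    Matrix (Fin k × Fin 2) (Fin k × Fin 2) ℝ :=
  Matrix.of fun p q =>
    if p.2 = 0 then (if q.2 = 0 then (A p.1 q.1).re else -(A p.1 q.1).im)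
    else (if q.2 = 0 then (A p.1 q.1).im else (A p.1 q.1).re)

/-- The standard embedding of a complex `k × k` matrix as a real `(2k+1) × (2k+1)` matrix:
realify and add a `1 × 1` identity block; this realizes `U(k) ⊂ SO(2k+1)`. -/
def embedU (k : ℕ) (A : Matrix (Fin k) (Fin k) ℂ) :
    Matrix (Fin (2 * k + 1)) (Fin (2 * k + 1)) ℝ :=
  Matrix.reindex (finCongr (by omega)) (finCongr (by omega))
    (Matrix.reindex finSumFinEquiv finSumFinEquiv
      (Matrix.fromBlocks
        (Matrix.reindex finProdFinEquiv finProdFinEquiv (realify A)) 0 0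
        (1 : Matrix (Fin 1) (Fin 1) ℝ)))

/-- The block inclusion `Matrix (Fin r) (Fin r) ℝ → Matrix (Fin (r+2)) (Fin (r+2)) ℝ`,
adding a `2 × 2` identity block; this realizes `SO(2k+1) ⊂ SO(2k+3)`. -/
def blockIncl {r : ℕ} (M : Matrix (Fin r) (Fin r) ℝ) :
    Matrix (Fin (r + 2)) (Fin (r + 2)) ℝ :=
  Matrix.reindex finSumFinEquiv finSumFinEquiv
    (Matrix.fromBlocks M 0 0 (1 : Matrix (Fin 2) (Fin 2) ℝ))

/-- `SO(m)`: the subgroup of the orthogonal group `O(m, ℝ)` of matrices of determinant 1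
(the set in question is a subgroup, so taking `Subgroup.closure` does not enlarge it). -/
def SOgrp (m : ℕ) : Subgroup (Matrix.orthogonalGroup (Fin m) ℝ) :=
  Subgroup.closure {A | ((A : Matrix (Fin m) (Fin m) ℝ)).det = 1}

/-- The image of `U(k)` in `SO(2k+1)` under the standard inclusion (again the set in
question is a subgroup, so `Subgroup.closure` does not enlarge it). -/
def UinSO (k : ℕ) : Subgroup (SOgrp (2 * k + 1)) :=
  Subgroup.closure {B | ∃ A ∈ Matrix.unitaryGroup (Fin k) ℂ,
    (((B : ↥(Matrix.orthogonalGroup (Fin (2 * k + 1)) ℝ)) :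
      Matrix (Fin (2 * k + 1)) (Fin (2 * k + 1)) ℝ)) = embedU k A}

/-- The homogeneous space `SO(2k+1)/U(k)` with the quotient topology. -/
def SOmodU (k : ℕ) : Type :=
  (SOgrp (2 * k + 1)) ⧸ (UinSO k)

instance (k : ℕ) : TopologicalSpace (SOmodU k) :=
  inferInstanceAs (TopologicalSpace ((SOgrp (2 * k + 1)) ⧸ (UinSO k)))

/-!
Let `e` be the last basis vector of `ℝ^(2k+3)`. The orbit map `SO(2k+3)/U(k+1) → S^(2k+2)`,
`[g] ↦ g • e`, is equivariant for `SO(2k+3)`, and its fibre over `e` is `SO(2k+1)/U(k)`: the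
group `U(k+1)` is transitive on the unit sphere of `eᗮ`, so an element fixing `e` can be corrected
by `U(k+1)` to fix the last two basis vectors, and `U(k+1) ∩ SO(2k+1) = U(k)` because `U(k)` is
the centralizer of the complex structure.

A map `v` from a compact space of dimension less than `2k+2` to the total space can be pushed into
this fibre, relative to the points already there. General position gives a map `w` to the sphere
that is never antipodal to the projection `π ∘ v` nor to `e`. A product of two reflections rotates
`π (v x)` to `w x`, and another one `w x` to `e`; these rotations act on the total space and carry
`v` along. Applied to `S^j` this is surjectivity on `π_j`, and applied to `I × S^j` it is
injectivity.
-/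

section HomotopyCompression

open unitInterval

variable {A B X : Type*} [TopologicalSpace A] [TopologicalSpace B] [TopologicalSpace X]

theorem homotopicRel_mono {f g : C(X, B)} {S T : Set X} (h : f.HomotopicRel g T) (hST : S ⊆ T) :
    f.HomotopicRel g S :=
  h.map fun K => ⟨K.toHomotopy, fun t x hx => K.prop t x (hST hx)⟩

/-- Every map `X → B` can be deformed into `A` along `i : A → B`, keeping fixed the points that
already lie in `i(A)`: the compression criterion for relative homotopy classes of `(B, A)`, with
`X` in place of a disc. -/
def CompressesMapsFrom (X : Type*) [TopologicalSpace X] (i : C(A, B)) : Prop :=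
  ∀ H : C(X, B), ∃ L : C(X, A), H.HomotopicRel (i.comp L) (H ⁻¹' Set.range i)

variable {i : C(A, B)} {x₀ : X} {a : A}

theorem CompressesMapsFrom.exists_homotopicRel (hX : CompressesMapsFrom X i)
    (hi : Function.Injective i) {v : C(X, B)} (hv : v x₀ = i a) :
    ∃ u : C(X, A), u x₀ = a ∧ (i.comp u).HomotopicRel v {x₀} := by
  obtain ⟨u, hu⟩ := hX v
  have hx₀ : x₀ ∈ v ⁻¹' Set.range i := ⟨a, hv.symm⟩
  exact ⟨u, hi ((hu.fst_eq_snd hx₀).symm.trans hv),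
    (homotopicRel_mono hu (Set.singleton_subset_iff.2 hx₀)).symm⟩

theorem CompressesMapsFrom.homotopicRel_of_comp (hX : CompressesMapsFrom (I × X) i)
    (hi : Function.Injective i) {u₁ u₂ : C(X, A)} {S : Set X}
    (h : (i.comp u₁).HomotopicRel (i.comp u₂) S) : u₁.HomotopicRel u₂ S := by
  obtain ⟨K⟩ := h
  obtain ⟨L, hL⟩ := hX K.toContinuousMap
  have lift_eq {p : I × X} {a : A} (hp : K p = i a) : L p = a :=
    hi ((hL.fst_eq_snd ⟨a, hp.symm⟩).symm.trans hp)
  exact ⟨⟨⟨L, fun x => lift_eq (K.apply_zero x), fun x => lift_eq (K.apply_one x)⟩,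
    fun t x hx => lift_eq (K.eq_fst t hx)⟩⟩

end HomotopyCompression

section GeneralPosition

open scoped unitInterval InnerProductSpace

theorem dense_setOf_locallyLipschitz_real (X : Type*) [MetricSpace X] [CompactSpace X] :
    Dense {f : C(X, ℝ) | LocallyLipschitz f} := by
  let lipschitzSubalgebra : Subalgebra ℝ C(X, ℝ) :=
    { carrier := {f | LocallyLipschitz f}
      mul_mem' := fun hf hg =>
        (contDiff_mul (𝔸 := ℝ) (𝕜 := ℝ) (n := 1)).locallyLipschitz.comp (hf.prodMk hg)
      add_mem' := fun hf hg => hf.add hg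
      algebraMap_mem' := fun c => LocallyLipschitz.const c }
  have hsep : lipschitzSubalgebra.SeparatesPoints := fun x y hxy =>
    ⟨fun z => dist z y, ⟨⟨_, continuous_id.dist continuous_const⟩,
      (LipschitzWith.dist_left y).locallyLipschitz, rfl⟩, by simpa using hxy⟩
  have htop := ContinuousMap.subalgebra_topologicalClosure_eq_top_of_separatesPoints _ hsep
  exact dense_iff_closure_eq.2 (congrArg SetLike.coe htop)

theorem dense_setOf_locallyLipschitz (X E : Type*) [MetricSpace X] [CompactSpace X]
    [NormedAddCommGroup E] [NormedSpace ℝ E] [FiniteDimensional ℝ E] :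
    Dense {f : C(X, E) | LocallyLipschitz f} := by
  let b := Module.finBasis ℝ E
  let assemble (F : Fin (Module.finrank ℝ E) → C(X, ℝ)) : C(X, E) :=
    ∑ i, (ContinuousLinearMap.toSpanSingleton ℝ (b i) : C(ℝ, E)).comp (F i)
  have hassemble : Continuous assemble :=
    continuous_finsetSum _ fun i _ =>
      (ContinuousMap.continuous_postcomp _).comp (continuous_apply i)
  have hsurj : Function.Surjective assemble := fun f =>
    ⟨fun i => ⟨fun x => b.equivFunL (f x) i, by fun_prop⟩,
      ContinuousMap.ext fun x => by simp [assemble]⟩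
  refine (hsurj.denseRange.dense_image hassemble (dense_pi Set.univ fun _ _ =>
    dense_setOf_locallyLipschitz_real X)).mono ?_
  rintro _ ⟨F, hF, rfl⟩
  rw [Set.mem_ofPred_eq, ContinuousMap.coe_sum]
  exact Finset.sum_induction _ LocallyLipschitz (fun _ _ => .add) (.const 0) fun i _ =>
    (ContinuousLinearMap.toSpanSingleton ℝ (b i)).lipschitz.locallyLipschitz.comp (hF i trivial)

variable {X E : Type*} [MetricSpace X] [CompactSpace X]

/-- By perturbing a locally Lipschitz approximation `g` by a small constant outside the range of
`g`, which has too small a dimension to contain a ball. -/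
theorem dense_setOf_forall_ne_zero [NormedAddCommGroup E] [NormedSpace ℝ E]
    [FiniteDimensional ℝ E] (hX : dimH (Set.univ : Set X) < Module.finrank ℝ E) :
    Dense {q : C(X, E) | ∀ x, q x ≠ 0} := by
  refine dense_closure.1 ((dense_setOf_locallyLipschitz X E).mono fun g hg => ?_)
  have hrange : Dense (Set.range g)ᶜ :=
    dense_compl_of_dimH_lt_finrank ((dimH_range_le_of_locally_lipschitzOn hg).trans_lt hX)
  have hshift : Continuous fun c : E => g - ContinuousMap.const X c := by fun_prop
  have h := hshift.range_subset_closure_image_dense hrange ⟨0, sub_zero g⟩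
  refine closure_mono ?_ h
  rintro _ ⟨c, hc, rfl⟩ x hx
  exact hc ⟨x, sub_eq_zero.1 hx⟩

/-- Polar coordinates: the cylinder is the image of `E \ {0}` under `y ↦ (log ‖y‖, y / ‖y‖)`. -/
theorem dimH_univ_prod_sphere_le (E : Type*) [NormedAddCommGroup E] [InnerProductSpace ℝ E]
    [FiniteDimensional ℝ E] :
    dimH ((Set.univ : Set ℝ) ×ˢ Metric.sphere (0 : E) 1) ≤ Module.finrank ℝ E := by
  let polar : E → ℝ × E := fun y => (Real.log ‖y‖, ‖y‖⁻¹ • y)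
  have hsub : (Set.univ : Set ℝ) ×ˢ Metric.sphere (0 : E) 1 ⊆ polar '' {0}ᶜ := by
    rintro ⟨t, x⟩ ⟨-, hx⟩
    have hx : ‖x‖ = 1 := by simpa using hx
    have hnorm : ‖Real.exp t • x‖ = Real.exp t := by
      rw [norm_smul, hx, mul_one, Real.norm_of_nonneg (Real.exp_pos t).le]
    refine ⟨Real.exp t • x, norm_ne_zero_iff.1 (hnorm.trans_ne (Real.exp_ne_zero t)), ?_⟩
    simp [polar, hnorm, smul_smul]
  have hpolar : ∀ y ∈ ({0}ᶜ : Set E), ∃ C, ∃ t ∈ nhdsWithin y {0}ᶜ, LipschitzOnWith C polar t :=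
    fun y hy => by
    have hnorm : ContDiffAt ℝ 1 (norm : E → ℝ) y := contDiffAt_norm ℝ hy
    have hy' : ‖y‖ ≠ 0 := norm_ne_zero_iff.2 hy
    obtain ⟨C, t, ht, hC⟩ := ((hnorm.log hy').prodMk
      ((hnorm.inv hy').smul contDiffAt_id)).exists_lipschitzOnWith
    exact ⟨C, t, nhdsWithin_le_nhds ht, hC⟩
  calc dimH ((Set.univ : Set ℝ) ×ˢ Metric.sphere (0 : E) 1)
      ≤ dimH (polar '' {0}ᶜ) := dimH_mono hsub
    _ ≤ dimH ({0}ᶜ : Set E) := dimH_image_le_of_locally_lipschitzOn hpolar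
    _ ≤ dimH (Set.univ : Set E) := dimH_mono (Set.subset_univ _)
    _ = Module.finrank ℝ E := Real.dimH_univ_eq_finrank E

theorem dimH_univ_unitInterval_prod_sphere_le (E : Type*) [NormedAddCommGroup E]
    [InnerProductSpace ℝ E] [FiniteDimensional ℝ E] :
    dimH (Set.univ : Set (I × Metric.sphere (0 : E) 1)) ≤ Module.finrank ℝ E := by
  have hiso : Isometry (Prod.map Subtype.val Subtype.val : I × Metric.sphere (0 : E) 1 → ℝ × E) :=
    isometry_subtype_coe.prodMap isometry_subtype_coe
  rw [← hiso.dimH_image]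
  refine (dimH_mono ?_).trans (dimH_univ_prod_sphere_le E)
  rintro _ ⟨x, -, rfl⟩
  exact ⟨trivial, x.2.2⟩

theorem dimH_univ_unitInterval_prod_sphere_lt {n m : ℕ} (h : n < m) :
    dimH (Set.univ : Set (I × Metric.sphere (0 : EuclideanSpace ℝ (Fin n)) 1)) < m := by
  refine (dimH_univ_unitInterval_prod_sphere_le _).trans_lt ?_
  rw [finrank_euclideanSpace_fin]
  exact_mod_cast h

theorem dimH_univ_le_dimH_univ_unitInterval_prod (X : Type*) [EMetricSpace X] :
    dimH (Set.univ : Set X) ≤ dimH (Set.univ : Set (I × X)) := by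
  have hiso : Isometry (Prod.mk (0 : I) : X → I × X) := fun x y => by simp [Prod.edist_eq]
  rw [← hiso.dimH_image]
  exact dimH_mono (Set.subset_univ _)

variable [NormedAddCommGroup E] [InnerProductSpace ℝ E]

theorem inner_add_smul_pos {u d : E} {s : ℝ} (hu : ‖u‖ = 1) (hs : |s| ≤ 1) (hd : ‖d‖ < 1) :
    0 < ⟪u, u + s • d⟫_ℝ := by
  have hsd : |⟪u, s • d⟫_ℝ| < 1 :=
    calc |⟪u, s • d⟫_ℝ| ≤ ‖u‖ * ‖s • d‖ := abs_real_inner_le_norm _ _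
      _ = |s| * ‖d‖ := by rw [hu, one_mul, norm_smul, Real.norm_eq_abs]
      _ < 1 := mul_lt_one_of_nonneg_of_lt_one_right hs (norm_nonneg _) hd
  rw [inner_add_right, real_inner_self_eq_norm_sq, hu]
  linarith [(abs_lt.1 hsd).1]

variable [FiniteDimensional ℝ E]

theorem exists_small_orthogonal_forall_add_notMem {L : Submodule ℝ E}
    (hX : dimH (Set.univ : Set X) < Module.finrank ℝ Lᗮ) (u : C(X, E)) {ε : ℝ} (hε : 0 < ε) :
    ∃ d : C(X, Lᗮ), ∀ x, ‖d x‖ < ε ∧ u x + d x ∉ L := by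
  let p : C(X, Lᗮ) := (Lᗮ.orthogonalProjectionOnto : C(E, Lᗮ)).comp u
  obtain ⟨q, hq, hqp⟩ := (dense_setOf_forall_ne_zero hX).exists_dist_lt p hε
  refine ⟨q - p, fun x => ⟨?_, fun hx => hq x ?_⟩⟩
  · rw [ContinuousMap.sub_apply, ← dist_eq_norm, dist_comm]
    exact (ContinuousMap.dist_apply_le_dist x).trans_lt hqp
  · have hp : u x - p x ∈ L := by
      simp [p, Submodule.starProjection_orthogonal_val]
    have hqL : (q x : E) ∈ L := by
      have h := L.sub_mem hx hp
      simpa using h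
    exact Subtype.ext (L.orthogonal_disjoint.le_bot ⟨hqL, (q x).2⟩)

/-- Perturb `u` off the line `ℝ ∙ e`, damping the perturbation by the factor
`min 1 (1 - ⟪u, e⟫)`, which vanishes where `u = e` and is `1` wherever `u` could be near `-e`. -/
theorem exists_map_not_sameRay_neg {e : E} (he : ‖e‖ = 1)
    (hX : dimH (Set.univ : Set X) < Module.finrank ℝ (ℝ ∙ e)ᗮ) (u : C(X, E))
    (hu : ∀ x, ‖u x‖ = 1) :
    ∃ z : C(X, E), ∀ x, 0 < ⟪u x, z x⟫_ℝ ∧ ¬ SameRay ℝ (z x) (-e) ∧ (u x = e → z x = e) := by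
  obtain ⟨d, hd⟩ := exists_small_orthogonal_forall_add_notMem hX u one_pos
  let s : X → ℝ := fun x => min 1 (1 - ⟪u x, e⟫_ℝ)
  have hs (x : X) : |s x| ≤ 1 := by
    have := real_inner_le_norm (u x) e
    rw [hu, he] at this
    exact abs_le.2 ⟨le_min (by norm_num) (by linarith), min_le_left _ _⟩
  refine ⟨⟨fun x => u x + s x • (d x : E), by fun_prop⟩, fun x =>
    ⟨inner_add_smul_pos (hu x) (hs x) (hd x).1, fun hray => (hd x).2 ?_, fun hx => ?_⟩⟩
  · have hz : u x + s x • (d x : E) = -(‖u x + s x • (d x : E)‖ • e) := by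
      simpa [he] using hray.norm_smul_eq.symm
    have hde : ⟪(d x : E), e⟫_ℝ = 0 := Submodule.mem_orthogonal_singleton_iff_inner_left.1 (d x).2
    have hue : ⟪u x, e⟫_ℝ = -‖u x + s x • (d x : E)‖ := by
      simpa [inner_add_left, inner_neg_left, real_inner_smul_left, hde, he]
        using congrArg (⟪·, e⟫_ℝ) hz
    have hs1 : s x = 1 := min_eq_left (by linarith [norm_nonneg (u x + s x • (d x : E))])
    rw [hs1, one_smul] at hz
    exact hz ▸ neg_mem (Submodule.smul_mem _ _ (Submodule.mem_span_singleton_self e))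
  · simp [s, hx, he]

theorem exists_unit_map_add_ne_zero {e : E} (he : ‖e‖ = 1)
    (hX : dimH (Set.univ : Set X) < Module.finrank ℝ (ℝ ∙ e)ᗮ) (u : C(X, E))
    (hu : ∀ x, ‖u x‖ = 1) :
    ∃ w : C(X, E), ∀ x, ‖w x‖ = 1 ∧ u x + w x ≠ 0 ∧ w x + e ≠ 0 ∧ (u x = e → w x = e) := by
  obtain ⟨z, hz⟩ := exists_map_not_sameRay_neg he hX u hu
  have hz0 (x : X) : z x ≠ 0 := fun h => (hz x).2.1 (h ▸ SameRay.zero_left _)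
  have hnorm (x : X) : 0 < ‖z x‖⁻¹ := inv_pos.2 (norm_pos_iff.2 (hz0 x))
  refine ⟨⟨fun x => ‖z x‖⁻¹ • z x, ?_⟩, fun x =>
    ⟨norm_smul_inv_norm (𝕜 := ℝ) (hz0 x), fun h => ?_, fun h => ?_, fun h => ?_⟩⟩
  · exact (z.continuous.norm.inv₀ fun x => norm_ne_zero_iff.2 (hz0 x)).smul z.continuous
  · have hpos : 0 < ⟪u x, ‖z x‖⁻¹ • z x⟫_ℝ := by
      rw [real_inner_smul_right]
      exact mul_pos (hnorm x) (hz x).1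
    have hw : ‖z x‖⁻¹ • z x = -u x := (neg_eq_of_add_eq_zero_right h).symm
    rw [hw, inner_neg_right, real_inner_self_eq_norm_sq, hu] at hpos
    norm_num at hpos
  · refine (hz x).2.1 ?_
    rw [← eq_neg_of_add_eq_zero_left h]
    exact SameRay.sameRay_pos_smul_right _ (hnorm x)
  · simp [(hz x).2.2 h, he]

end GeneralPosition

section SpecialOrthogonal

open Matrix

variable {n : ℕ}

theorem mem_SOgrp {A : orthogonalGroup (Fin n) ℝ} :
    A ∈ SOgrp n ↔ (A : Matrix (Fin n) (Fin n) ℝ).det = 1 := by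
  let detHom : orthogonalGroup (Fin n) ℝ →* ℝ := detMonoidHom.comp (Submonoid.subtype _)
  suffices SOgrp n = detHom.ker by rw [this]; exact MonoidHom.mem_ker
  exact Subgroup.closure_eq detHom.ker

/-- The matrix underlying an element of `SO(n)`. -/
def soMatrix (g : SOgrp n) : Matrix (Fin n) (Fin n) ℝ :=
  (g : orthogonalGroup (Fin n) ℝ)

theorem soMatrix_injective : Function.Injective (soMatrix (n := n)) :=
  Subtype.val_injective.comp Subtype.val_injective

theorem isEmbedding_soMatrix : Topology.IsEmbedding (soMatrix (n := n)) :=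
  Topology.IsEmbedding.subtypeVal.comp Topology.IsEmbedding.subtypeVal

@[fun_prop]
theorem continuous_soMatrix : Continuous (soMatrix (n := n)) :=
  isEmbedding_soMatrix.continuous

@[simp]
theorem soMatrix_inv (g : SOgrp n) : soMatrix g⁻¹ = (soMatrix g)ᵀ := rfl

theorem transpose_soMatrix_mul_self (g : SOgrp n) : (soMatrix g)ᵀ * soMatrix g = 1 :=
  congrArg soMatrix (inv_mul_cancel g)

theorem range_soMatrix :
    Set.range (soMatrix (n := n)) = {M | M ∈ orthogonalGroup (Fin n) ℝ ∧ M.det = 1} := by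
  ext M
  exact ⟨by rintro ⟨g, rfl⟩; exact ⟨g.1.2, mem_SOgrp.1 g.2⟩,
    fun ⟨hM, hdet⟩ => ⟨⟨⟨M, hM⟩, mem_SOgrp.2 hdet⟩, rfl⟩⟩

theorem isCompact_unitaryGroup (m 𝕜 : Type*) [Fintype m] [DecidableEq m] [RCLike 𝕜] :
    IsCompact (unitaryGroup m 𝕜 : Set (Matrix m m 𝕜)) := by
  have hclosed : IsClosed (unitaryGroup m 𝕜 : Set (Matrix m m 𝕜)) := isClosed_unitary
  refine IsCompact.of_isClosed_subset (isCompact_univ_pi fun _ => isCompact_univ_pi fun _ =>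
    isCompact_closedBall (0 : 𝕜) 1) hclosed fun M hM i _ j _ => ?_
  simpa using entry_norm_bound_of_unitary hM i j

instance : CompactSpace (SOgrp n) := by
  rw [← isCompact_univ_iff, isEmbedding_soMatrix.isCompact_iff, Set.image_univ, range_soMatrix]
  exact (isCompact_unitaryGroup (Fin n) ℝ).inter_right
    (isClosed_eq (by fun_prop) continuous_const)

/-- Unitary matrices as the linear isometries of Euclidean space. -/
def unitaryGroupEquiv (m 𝕜 : Type*) [Fintype m] [DecidableEq m] [RCLike 𝕜] :
    unitaryGroup m 𝕜 ≃* (EuclideanSpace 𝕜 m ≃ₗᵢ[𝕜] EuclideanSpace 𝕜 m) :=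
  (Unitary.mapEquiv { toEuclideanCLM (n := m) (𝕜 := 𝕜) with }).toMulEquiv.trans
    Unitary.linearIsometryEquiv

/-- The standard action of `SO(n)` on Euclidean space. -/
instance : SMul (SOgrp n) (EuclideanSpace ℝ (Fin n)) where
  smul g v := unitaryGroupEquiv (Fin n) ℝ g v

instance : MulAction (SOgrp n) (EuclideanSpace ℝ (Fin n)) where
  one_smul v := by
    change unitaryGroupEquiv (Fin n) ℝ 1 v = v
    rw [map_one]; rfl
  mul_smul g h v := by
    change unitaryGroupEquiv (Fin n) ℝ (g.1 * h.1) v = _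
    rw [map_mul]; rfl

theorem SOgrp.smul_eq_toLp (g : SOgrp n) (v : EuclideanSpace ℝ (Fin n)) :
    g • v = WithLp.toLp 2 (soMatrix g *ᵥ v) := rfl

@[simp]
theorem SOgrp.norm_smul (g : SOgrp n) (v : EuclideanSpace ℝ (Fin n)) : ‖g • v‖ = ‖v‖ :=
  (unitaryGroupEquiv (Fin n) ℝ g).norm_map v

instance : ContinuousSMul (SOgrp n) (EuclideanSpace ℝ (Fin n)) where
  continuous_smul := by
    simp only [SOgrp.smul_eq_toLp]
    fun_prop

theorem soMatrix_apply (g : SOgrp n) (i j : Fin n) :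
    soMatrix g i j = (g • EuclideanSpace.single j (1 : ℝ)) i := by
  simp [SOgrp.smul_eq_toLp]

theorem SOgrp.ext_smul {g h : SOgrp n} (hgh : ∀ v : EuclideanSpace ℝ (Fin n), g • v = h • v) :
    g = h :=
  soMatrix_injective <| Matrix.ext fun i j => by simp only [soMatrix_apply, hgh]

theorem SOgrp.continuous_of_forall_smul {Z : Type*} [TopologicalSpace Z] {f : Z → SOgrp n}
    (hf : ∀ v : EuclideanSpace ℝ (Fin n), Continuous fun z => f z • v) : Continuous f := by
  refine isEmbedding_soMatrix.continuous_iff.2 (continuous_matrix fun i j => ?_)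
  simp only [Function.comp_apply, soMatrix_apply]
  have := hf (EuclideanSpace.single j 1)
  fun_prop

theorem det_unitaryGroupEquiv (A : orthogonalGroup (Fin n) ℝ) :
    LinearMap.det (unitaryGroupEquiv (Fin n) ℝ A).toLinearEquiv.toLinearMap = A.1.det := by
  change LinearMap.det (toLpLin 2 2 A.1) = A.1.det
  rw [toLpLin_eq_toLin, LinearMap.det_toLin]

/-- An orientation preserving linear isometry of Euclidean space, as an element of `SO(n)`. -/
def SOgrp.ofIsometry (f : EuclideanSpace ℝ (Fin n) ≃ₗᵢ[ℝ] EuclideanSpace ℝ (Fin n))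
    (hf : LinearMap.det f.toLinearEquiv.toLinearMap = 1) : SOgrp n :=
  ⟨(unitaryGroupEquiv (Fin n) ℝ).symm f, mem_SOgrp.2 (by
    rw [← det_unitaryGroupEquiv, MulEquiv.apply_symm_apply, hf])⟩

@[simp]
theorem SOgrp.ofIsometry_smul {f : EuclideanSpace ℝ (Fin n) ≃ₗᵢ[ℝ] EuclideanSpace ℝ (Fin n)}
    (hf : LinearMap.det f.toLinearEquiv.toLinearMap = 1) (v : EuclideanSpace ℝ (Fin n)) :
    SOgrp.ofIsometry f hf • v = f v :=
  congrArg (· v) ((unitaryGroupEquiv (Fin n) ℝ).apply_symm_apply f)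

theorem det_reflection_orthogonal_singleton {E : Type*} [NormedAddCommGroup E]
    [InnerProductSpace ℝ E] [FiniteDimensional ℝ E] {v : E} (hv : v ≠ 0) :
    LinearMap.det (ℝ ∙ v)ᗮ.reflection.toLinearEquiv.toLinearMap = -1 := by
  rw [Submodule.det_reflection, Submodule.orthogonal_orthogonal, finrank_span_singleton hv, pow_one]

/-- The product of the reflections in the hyperplanes orthogonal to two nonzero vectors; as `v`
moves away from `w`, this is a path in `SO(n)` starting at the identity. -/
def reflectionProduct (v w : {v : EuclideanSpace ℝ (Fin n) // v ≠ 0}) : SOgrp n :=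
  SOgrp.ofIsometry ((ℝ ∙ (w : EuclideanSpace ℝ (Fin n)))ᗮ.reflection.trans
    (ℝ ∙ (v : EuclideanSpace ℝ (Fin n)))ᗮ.reflection) (by
      change LinearMap.det (_ ∘ₗ _) = 1
      rw [LinearMap.det_comp, det_reflection_orthogonal_singleton v.2,
        det_reflection_orthogonal_singleton w.2]
      norm_num)

variable {v w : {v : EuclideanSpace ℝ (Fin n) // v ≠ 0}}

theorem reflectionProduct_smul (x : EuclideanSpace ℝ (Fin n)) :
    reflectionProduct v w • x = (ℝ ∙ (v : EuclideanSpace ℝ (Fin n)))ᗮ.reflection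
      ((ℝ ∙ (w : EuclideanSpace ℝ (Fin n)))ᗮ.reflection x) :=
  SOgrp.ofIsometry_smul _ x

theorem reflection_orthogonal_singleton_apply {E : Type*} [NormedAddCommGroup E]
    [InnerProductSpace ℝ E] (v x : E) :
    (ℝ ∙ v)ᗮ.reflection x = x - (2 * (inner ℝ v x / ‖v‖ ^ 2)) • v := by
  rw [Submodule.reflection_orthogonal_apply, Submodule.reflection_singleton_apply, neg_sub,
    ← ofNat_smul_eq_nsmul ℝ, smul_smul]
  simp

@[fun_prop]
theorem continuous_reflectionProduct {Z : Type*} [TopologicalSpace Z]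
    {a b : Z → {v : EuclideanSpace ℝ (Fin n) // v ≠ 0}} (ha : Continuous a) (hb : Continuous b) :
    Continuous fun z => reflectionProduct (a z) (b z) := by
  refine SOgrp.continuous_of_forall_smul fun x => ?_
  simp only [reflectionProduct_smul, reflection_orthogonal_singleton_apply]
  have hne (v : {v : EuclideanSpace ℝ (Fin n) // v ≠ 0}) :
      ‖(v : EuclideanSpace ℝ (Fin n))‖ ^ 2 ≠ 0 :=
    pow_ne_zero 2 (norm_ne_zero_iff.2 v.2)
  fun_prop (disch := simp [hne])

theorem reflectionProduct_smul_of_eq_add {x y : EuclideanSpace ℝ (Fin n)} (hxy : ‖x‖ = ‖y‖)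
    (hv : (v : EuclideanSpace ℝ (Fin n)) = x + y) (hw : (w : EuclideanSpace ℝ (Fin n)) = x) :
    reflectionProduct v w • x = y := by
  have h : (ℝ ∙ (x - -y))ᗮ.reflection x = -y := Submodule.reflection_sub (by rw [norm_neg, hxy])
  rw [reflectionProduct_smul, hv, hw, Submodule.reflection_orthogonalComplement_singleton_eq_neg,
    map_neg, ← sub_neg_eq_add, h, neg_neg]

theorem reflectionProduct_eq_one {c : ℝ}
    (hvw : (v : EuclideanSpace ℝ (Fin n)) = c • (w : EuclideanSpace ℝ (Fin n))) :
    reflectionProduct v w = 1 := by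
  have hc : c ≠ 0 := by
    rintro rfl
    exact v.2 (by rw [hvw, zero_smul])
  refine SOgrp.ext_smul fun x => ?_
  simp only [reflectionProduct_smul, one_smul, hvw, Submodule.span_singleton_smul_eq hc.isUnit,
    Submodule.reflection_reflection]

end SpecialOrthogonal

section EquivariantMap

open scoped unitInterval

variable {n : ℕ} {X Y : Type*} [TopologicalSpace X]

theorem add_smul_ne_zero_of_norm_eq {E : Type*} [NormedAddCommGroup E] [NormedSpace ℝ E]
    {x y : E} (hxy : ‖x‖ = ‖y‖) (hne : x + y ≠ 0) {t : ℝ} (ht : 0 ≤ t) : x + t • y ≠ 0 := by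
  intro h
  have hnorm : ‖y‖ = t * ‖y‖ := by
    conv_lhs => rw [← hxy, eq_neg_of_add_eq_zero_left h, norm_neg, norm_smul,
      Real.norm_of_nonneg ht]
  rcases eq_or_ne ‖y‖ 0 with hy | hy
  · rw [norm_eq_zero.1 hy, norm_eq_zero.1 (hxy.trans hy), add_zero] at hne
    exact hne rfl
  · rw [(right_eq_mul₀ hy).1 hnorm, one_smul] at h
    exact hne h

theorem exists_continuousMap_rotation (a b : C(X, EuclideanSpace ℝ (Fin n)))
    (ha : ∀ x, a x ≠ 0) (hab : ∀ x, ‖a x‖ = ‖b x‖) (hne : ∀ x, a x + b x ≠ 0) :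
    ∃ R : C(I × X, SOgrp n), (∀ x, R (0, x) = 1) ∧ (∀ x, R (1, x) • a x = b x) ∧
      ∀ t x, a x = b x → R (t, x) = 1 := by
  let base (x : X) : {v : EuclideanSpace ℝ (Fin n) // v ≠ 0} := ⟨a x, ha x⟩
  let moving (p : I × X) : {v : EuclideanSpace ℝ (Fin n) // v ≠ 0} :=
    ⟨a p.2 + (p.1 : ℝ) • b p.2, add_smul_ne_zero_of_norm_eq (hab _) (hne p.2) p.1.2.1⟩
  have hbase : Continuous base := .subtype_mk (by fun_prop) _
  have hmoving : Continuous moving := .subtype_mk (by fun_prop) _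
  let R : C(I × X, SOgrp n) :=
    ⟨fun p => reflectionProduct (moving p) (base p.2),
      continuous_reflectionProduct hmoving (hbase.comp continuous_snd)⟩
  have hR (p : I × X) : R p = reflectionProduct (moving p) (base p.2) := rfl
  refine ⟨R, fun x => ?_, fun x => ?_, fun t x hx => ?_⟩
  · rw [hR]
    exact reflectionProduct_eq_one (c := 1) (by simp [moving, base])
  · rw [hR]
    exact reflectionProduct_smul_of_eq_add (hab x) (by simp [moving]) rfl
  · rw [hR]
    exact reflectionProduct_eq_one (c := 1 + t) (by simp [moving, base, ← hx, add_smul])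

variable [TopologicalSpace Y] [MulAction (SOgrp n) Y] [ContinuousSMul (SOgrp n) Y]
  {π : C(Y, EuclideanSpace ℝ (Fin n))}

theorem exists_homotopicRel_comp_eq (hequiv : ∀ (g : SOgrp n) (y : Y), π (g • y) = g • π y)
    (hunit : ∀ y, ‖π y‖ = 1) (v : C(X, Y)) (w : C(X, EuclideanSpace ℝ (Fin n)))
    (hw : ∀ x, ‖w x‖ = 1) (hvw : ∀ x, π (v x) + w x ≠ 0) :
    ∃ v' : C(X, Y), π.comp v' = w ∧ v.HomotopicRel v' {x | π (v x) = w x} := by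
  obtain ⟨R, hR₀, hR₁, hR⟩ := exists_continuousMap_rotation (π.comp v) w
    (fun x => norm_ne_zero_iff.1 (by simp [hunit])) (fun x => by simp [hunit, hw]) hvw
  let H : C(I × X, Y) := ⟨fun p => R p • v p.2, by fun_prop⟩
  have hH (p : I × X) : H p = R p • v p.2 := rfl
  refine ⟨H.comp ⟨fun x => (1, x), by fun_prop⟩, ContinuousMap.ext fun x => ?_,
    ⟨⟨⟨H, fun x => ?_, fun x => rfl⟩, fun t x hx => ?_⟩⟩⟩
  · simpa [hH, hequiv] using hR₁ x
  · change H (0, x) = v x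
    rw [hH, hR₀, one_smul]
  · change H (t, x) = v x
    rw [hH, hR t x hx, one_smul]

end EquivariantMap

section FibreCompression

open scoped unitInterval

variable {n : ℕ} {X Y : Type*} [MetricSpace X] [CompactSpace X] [TopologicalSpace Y]
  [MulAction (SOgrp n) Y] [ContinuousSMul (SOgrp n) Y] {π : C(Y, EuclideanSpace ℝ (Fin n))}

theorem exists_homotopicRel_comp_eq_const
    (hequiv : ∀ (g : SOgrp n) (y : Y), π (g • y) = g • π y) (hunit : ∀ y, ‖π y‖ = 1)
    {e : EuclideanSpace ℝ (Fin n)} (he : ‖e‖ = 1)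
    (hX : dimH (Set.univ : Set X) < Module.finrank ℝ (ℝ ∙ e)ᗮ) (v : C(X, Y)) :
    ∃ v' : C(X, Y), (∀ x, π (v' x) = e) ∧ v.HomotopicRel v' {x | π (v x) = e} := by
  obtain ⟨w, hw⟩ := exists_unit_map_add_ne_zero he hX (π.comp v) fun x => hunit _
  obtain ⟨v₁, hv₁, hvv₁⟩ := exists_homotopicRel_comp_eq hequiv hunit v w (fun x => (hw x).1)
    fun x => (hw x).2.1
  have hπv₁ (x : X) : π (v₁ x) = w x := DFunLike.congr_fun hv₁ x
  obtain ⟨v₂, hv₂, hv₁v₂⟩ := exists_homotopicRel_comp_eq hequiv hunit v₁ (.const X e)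
    (fun _ => he) fun x => by rw [hπv₁]; exact (hw x).2.2.1
  have hwe {x : X} (hx : π (v x) = e) : w x = e := (hw x).2.2.2 hx
  exact ⟨v₂, fun x => DFunLike.congr_fun hv₂ x,
    (homotopicRel_mono hvv₁ fun x hx => hx.trans (hwe hx).symm).trans
      (homotopicRel_mono hv₁v₂ fun x hx => (hπv₁ x).trans (hwe hx))⟩

end FibreCompression

section BlockInclusion

open Matrix

variable {r : ℕ}

theorem blockIncl_injective : Function.Injective (blockIncl (r := r)) := fun _ _ h =>
  (fromBlocks_inj.1 ((reindex finSumFinEquiv finSumFinEquiv).injective h)).1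

theorem blockIncl_mul (M N : Matrix (Fin r) (Fin r) ℝ) :
    blockIncl (M * N) = blockIncl M * blockIncl N := by
  simp [blockIncl, submatrix_mul_equiv, fromBlocks_multiply]

theorem blockIncl_one : blockIncl (1 : Matrix (Fin r) (Fin r) ℝ) = 1 := by
  simp [blockIncl, fromBlocks_one]

theorem blockIncl_transpose (M : Matrix (Fin r) (Fin r) ℝ) : blockIncl Mᵀ = (blockIncl M)ᵀ := by
  simp [blockIncl, fromBlocks_transpose, transpose_submatrix]

theorem det_blockIncl (M : Matrix (Fin r) (Fin r) ℝ) : (blockIncl M).det = M.det := by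
  rw [blockIncl, det_reindex_self, det_fromBlocks_zero₂₁, det_one, mul_one]

theorem continuous_blockIncl : Continuous (blockIncl (r := r)) := by
  unfold blockIncl
  simp only [reindex_apply]
  fun_prop

theorem blockIncl_mem_orthogonalGroup_iff {M : Matrix (Fin r) (Fin r) ℝ} :
    blockIncl M ∈ orthogonalGroup (Fin (r + 2)) ℝ ↔ M ∈ orthogonalGroup (Fin r) ℝ := by
  rw [mem_orthogonalGroup_iff, mem_orthogonalGroup_iff, ← blockIncl_transpose, ← blockIncl_mul,
    ← blockIncl_one, blockIncl_injective.eq_iff]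

theorem exists_blockIncl_eq {M : Matrix (Fin (r + 2)) (Fin (r + 2)) ℝ}
    (hM : M ∈ orthogonalGroup (Fin (r + 2)) ℝ)
    (hcol : ∀ b, M.col (Fin.natAdd r b) = Pi.single (Fin.natAdd r b) 1) :
    ∃ N, blockIncl N = M := by
  obtain ⟨B, rfl⟩ := (reindex finSumFinEquiv finSumFinEquiv).surjective M
  obtain ⟨N, b, c, d, rfl⟩ : ∃ N b c d, B = fromBlocks N b c d :=
    ⟨_, _, _, _, (fromBlocks_toBlocks B).symm⟩
  obtain rfl : b = 0 := by
    ext i j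
    simpa [Pi.single_apply, Fin.ext_iff, (Nat.lt_add_right _ i.2).ne] using
      congrFun (hcol j) (Fin.castAdd 2 i)
  obtain rfl : d = 1 := by
    ext i j
    simpa [Pi.single_apply, one_apply] using congrFun (hcol j) (Fin.natAdd r i)
  obtain rfl : c = 0 := by
    let B : Matrix (Fin r ⊕ Fin 2) (Fin r ⊕ Fin 2) ℝ := fromBlocks N 0 c 1
    have hB : Bᵀ * B = 1 := (reindex finSumFinEquiv finSumFinEquiv).injective (by
      simpa [submatrix_mul_equiv] using (mem_orthogonalGroup_iff' _ _).1 hM)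
    have hBc : Nᵀ * N + cᵀ * c = 1 ∧ c = 0 := by
      simpa [B, fromBlocks_transpose, fromBlocks_multiply, ← fromBlocks_one, fromBlocks_inj]
        using hB
    exact hBc.2
  exact ⟨N, rfl⟩

/-- The block inclusion `SO(r) ⊂ SO(r + 2)`. -/
def soIncl (r : ℕ) : SOgrp r →* SOgrp (r + 2) where
  toFun g := ⟨⟨blockIncl (soMatrix g), blockIncl_mem_orthogonalGroup_iff.2 g.1.2⟩,
    mem_SOgrp.2 <| (det_blockIncl _).trans (mem_SOgrp.1 g.2)⟩
  map_one' := soMatrix_injective blockIncl_one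
  map_mul' g h := soMatrix_injective (blockIncl_mul (soMatrix g) (soMatrix h))

@[simp]
theorem soMatrix_soIncl (g : SOgrp r) : soMatrix (soIncl r g) = blockIncl (soMatrix g) := rfl

theorem continuous_soIncl : Continuous (soIncl r) :=
  isEmbedding_soMatrix.continuous_iff.2 (continuous_blockIncl.comp continuous_soMatrix)

theorem col_soMatrix_eq_single_iff {g : SOgrp r} {i j : Fin r} :
    (soMatrix g).col j = Pi.single i 1 ↔
      g • EuclideanSpace.single j (1 : ℝ) = EuclideanSpace.single i 1 := by
  rw [← (WithLp.toLp_injective 2).eq_iff]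
  simp [SOgrp.smul_eq_toLp]

theorem mem_range_soIncl_iff {g : SOgrp (r + 2)} : g ∈ (soIncl r).range ↔
    ∀ b : Fin 2, g • EuclideanSpace.single (Fin.natAdd r b) (1 : ℝ) =
      EuclideanSpace.single (Fin.natAdd r b) 1 := by
  simp only [← col_soMatrix_eq_single_iff]
  refine ⟨?_, fun h => ?_⟩
  · rintro ⟨g, rfl⟩ b
    ext p
    induction p using Fin.addCases <;>
      simp [blockIncl, Pi.single_apply, one_apply, Fin.ext_iff]
    omega
  · obtain ⟨N, hN⟩ := exists_blockIncl_eq g.1.2 h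
    have hNo : N ∈ orthogonalGroup (Fin r) ℝ := blockIncl_mem_orthogonalGroup_iff.1 (hN ▸ g.1.2)
    have hdet : N.det = 1 := by rw [← det_blockIncl, hN, mem_SOgrp.1 g.2]
    exact ⟨⟨⟨N, hNo⟩, mem_SOgrp.2 hdet⟩, soMatrix_injective hN⟩

end BlockInclusion

section Realification

open Matrix Kronecker

variable {k : ℕ}

theorem realify_eq_compRingEquiv (A : Matrix (Fin k) (Fin k) ℂ) :
    realify A = compRingEquiv (Fin k) (Fin 2) ℝ
      ((Algebra.leftMulMatrix Complex.basisOneI).toRingHom.mapMatrix A) := by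
  ext ⟨i, a⟩ ⟨j, b⟩
  fin_cases a <;> fin_cases b <;> simp [realify, Algebra.leftMulMatrix_complex]

theorem realify_mul (A B : Matrix (Fin k) (Fin k) ℂ) :
    realify (A * B) = realify A * realify B := by
  simp only [realify_eq_compRingEquiv, map_mul]

theorem realify_one : realify (1 : Matrix (Fin k) (Fin k) ℂ) = 1 := by
  rw [realify_eq_compRingEquiv, map_one, map_one]

theorem realify_star (A : Matrix (Fin k) (Fin k) ℂ) : realify (star A) = (realify A)ᵀ := by
  ext ⟨i, a⟩ ⟨j, b⟩
  fin_cases a <;> fin_cases b <;> simp [realify, star_apply]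

theorem realify_injective : Function.Injective (realify (k := k)) := fun A B h => by
  ext i j
  exact Complex.ext (congrFun₂ h (i, 0) (j, 0)) (congrFun₂ h (i, 1) (j, 0))

theorem det_realify (A : Matrix (Fin k) (Fin k) ℂ) : (realify A).det = Complex.normSq A.det := by
  rw [← Algebra.norm_complex_apply, Algebra.norm_eq_matrix_det Complex.basisOneI,
    realify_eq_compRingEquiv]
  exact (det_det A (Algebra.leftMulMatrix Complex.basisOneI).toRingHom).symm

theorem realify_I_smul_one :
    realify (Complex.I • (1 : Matrix (Fin k) (Fin k) ℂ)) = 1 ⊗ₖ !![0, -1; 1, 0] := by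
  ext ⟨i, a⟩ ⟨j, b⟩
  fin_cases a <;> fin_cases b <;> by_cases h : i = j <;> simp [realify, one_apply, h]

theorem exists_realify_eq_iff {M : Matrix (Fin k × Fin 2) (Fin k × Fin 2) ℝ} :
    (∃ A, realify A = M) ↔ Commute M (realify (Complex.I • 1)) := by
  constructor
  · rintro ⟨A, rfl⟩
    rw [Commute, SemiconjBy, ← realify_mul, ← realify_mul, mul_smul_comm, smul_mul_assoc, mul_one,
      one_mul]
  · rw [realify_I_smul_one]
    intro h
    refine ⟨of fun i j => ⟨M (i, 0) (j, 0), M (i, 1) (j, 0)⟩, ?_⟩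
    ext ⟨i, a⟩ ⟨j, b⟩
    have h₀ : M (i, 0) (j, 1) = -M (i, 1) (j, 0) := by
      simpa [mul_apply, Fintype.sum_prod_type, one_apply] using congrFun₂ h.eq (i, 0) (j, 0)
    have h₁ : M (i, 1) (j, 1) = M (i, 0) (j, 0) := by
      simpa [mul_apply, Fintype.sum_prod_type, one_apply] using congrFun₂ h.eq (i, 1) (j, 0)
    fin_cases a <;> fin_cases b <;> simp [realify, h₀, h₁]

/-- The index equivalence underlying `embedU`. -/
def embedUIndex (k : ℕ) : (Fin k × Fin 2) ⊕ Fin 1 ≃ Fin (2 * k + 1) :=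
  ((finProdFinEquiv.sumCongr (Equiv.refl (Fin 1))).trans finSumFinEquiv).trans
    (finCongr (by omega))

@[simp]
theorem val_embedUIndex_inl (i : Fin k) (a : Fin 2) :
    (embedUIndex k (.inl (i, a)) : ℕ) = a + 2 * i := by
  simp [embedUIndex]

@[simp]
theorem val_embedUIndex_inr (a : Fin 1) : (embedUIndex k (.inr a) : ℕ) = 2 * k := by
  simp [embedUIndex, mul_comm]

theorem embedU_eq_reindex (A : Matrix (Fin k) (Fin k) ℂ) :
    embedU k A = reindex (embedUIndex k) (embedUIndex k) (fromBlocks (realify A) 0 0 1) := by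
  ext p q
  obtain ⟨p, rfl⟩ := (embedUIndex k).surjective p
  obtain ⟨q, rfl⟩ := (embedUIndex k).surjective q
  rcases p with p | p <;> rcases q with q | q <;> simp [embedU, embedUIndex]

theorem embedU_mul (A B : Matrix (Fin k) (Fin k) ℂ) :
    embedU k (A * B) = embedU k A * embedU k B := by
  simp [embedU_eq_reindex, submatrix_mul_equiv, fromBlocks_multiply, realify_mul]

theorem embedU_one : embedU k 1 = 1 := by
  simp [embedU_eq_reindex, fromBlocks_one, realify_one]

theorem embedU_star (A : Matrix (Fin k) (Fin k) ℂ) : embedU k (star A) = (embedU k A)ᵀ := by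
  simp [embedU_eq_reindex, fromBlocks_transpose, transpose_submatrix, realify_star]

theorem embedU_injective : Function.Injective (embedU k) := fun A B h => by
  simp only [embedU_eq_reindex, EmbeddingLike.apply_eq_iff_eq, fromBlocks_inj] at h
  exact realify_injective h.1

theorem det_embedU (A : Matrix (Fin k) (Fin k) ℂ) : (embedU k A).det = Complex.normSq A.det := by
  rw [embedU_eq_reindex, det_reindex_self, det_fromBlocks_zero₂₁, det_one, mul_one, det_realify]

theorem embedU_mem_orthogonalGroup_iff {A : Matrix (Fin k) (Fin k) ℂ} :
    embedU k A ∈ orthogonalGroup (Fin (2 * k + 1)) ℝ ↔ A ∈ unitaryGroup (Fin k) ℂ := by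
  rw [mem_orthogonalGroup_iff, mem_unitaryGroup_iff, ← embedU_star, ← embedU_mul, ← embedU_one,
    embedU_injective.eq_iff]

/-- The element of `SO(2k+1)` given by a unitary matrix of size `k`. -/
def soOfUnitary (k : ℕ) : unitaryGroup (Fin k) ℂ →* SOgrp (2 * k + 1) where
  toFun A := ⟨⟨embedU k A, embedU_mem_orthogonalGroup_iff.2 A.2⟩, mem_SOgrp.2 <| by
    change (embedU k A).det = 1
    rw [det_embedU]
    have hdet : star (det A.1) * det A.1 = 1 := (det_of_mem_unitary A.2).1
    rw [Complex.star_def, ← Complex.normSq_eq_conj_mul_self] at hdet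
    exact_mod_cast hdet⟩
  map_one' := soMatrix_injective embedU_one
  map_mul' A B := soMatrix_injective (embedU_mul A.1 B.1)

theorem UinSO_eq_range : UinSO k = (soOfUnitary k).range := by
  rw [← Subgroup.closure_eq (soOfUnitary k).range]
  refine congrArg Subgroup.closure (Set.ext fun g => ?_)
  simp only [Set.mem_ofPred_eq, SetLike.mem_coe, MonoidHom.mem_range, Subtype.exists,
    ← soMatrix_injective.eq_iff]
  exact ⟨fun ⟨A, hA, h⟩ => ⟨A, hA, h.symm⟩, fun ⟨A, hA, h⟩ => ⟨A, hA, h.symm⟩⟩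

/-- The matrix with diagonal blocks `[[0, -1], [1, 0]]` in the coordinates `(2i, 2i+1)`, completed
by `0` if `n` is odd. For `n = 2k` this is multiplication by `i` on `ℂᵏ = ℝ²ᵏ`. -/
def complexStructure (n : ℕ) : Matrix (Fin n) (Fin n) ℝ :=
  of fun p q => if Odd (p : ℕ) ∧ (p : ℕ) = q + 1 then 1 else
    if Odd (q : ℕ) ∧ (q : ℕ) = p + 1 then -1 else 0

theorem complexStructure_eq_reindex (k : ℕ) : complexStructure (2 * k + 1) =
    reindex (embedUIndex k) (embedUIndex k) (fromBlocks (realify (Complex.I • 1)) 0 0 0) := by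
  ext p q
  obtain ⟨p, rfl⟩ := (embedUIndex k).surjective p
  obtain ⟨q, rfl⟩ := (embedUIndex k).surjective q
  rcases p with ⟨i, a⟩ | p <;> rcases q with ⟨j, b⟩ | q
  · simp only [reindex_apply, submatrix_apply, Equiv.symm_apply_apply, fromBlocks_apply₁₁,
      realify_I_smul_one, complexStructure, of_apply, val_embedUIndex_inl, kroneckerMap_apply,
      one_apply, Fin.ext_iff]
    fin_cases a <;> fin_cases b <;> simp <;> grind
  · fin_cases a <;> simp [complexStructure] <;> grind
  · fin_cases b <;> simp [complexStructure] <;> grind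
  · simp [complexStructure]

theorem soMatrix_mem_range_embedU {g : SOgrp (2 * k + 1)}
    (hg : Commute (soMatrix g) (complexStructure (2 * k + 1))) :
    soMatrix g ∈ Set.range (embedU k) := by
  obtain ⟨B, hB⟩ := (reindexAlgEquiv ℝ ℝ (embedUIndex k)).surjective (soMatrix g)
  obtain ⟨N, b, c, d, rfl⟩ : ∃ N b c d, B = fromBlocks N b c d :=
    ⟨_, _, _, _, (fromBlocks_toBlocks B).symm⟩
  have hcomm : Commute (fromBlocks N b c d) (fromBlocks (realify (Complex.I • 1)) 0 0 0) := by
    refine Commute.of_map (f := reindexAlgEquiv ℝ ℝ (embedUIndex k)) (AlgEquiv.injective _) ?_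
    rw [hB]
    simpa [complexStructure_eq_reindex] using hg
  rw [Commute, SemiconjBy, fromBlocks_multiply, fromBlocks_multiply, fromBlocks_inj] at hcomm
  simp only [mul_zero, add_zero, zero_mul, Matrix.mul_zero, Matrix.zero_mul] at hcomm
  obtain ⟨A, rfl⟩ := exists_realify_eq_iff.2 hcomm.1
  have hinv :
      realify (-Complex.I • 1) * realify (Complex.I • (1 : Matrix (Fin k) (Fin k) ℂ)) = 1 := by
    simp [← realify_mul, realify_one, smul_smul]
  obtain rfl : b = 0 := mul_right_injective_of_inv _ _ hinv (by simp [← hcomm.2.1])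
  obtain rfl : c = 0 :=
    mul_left_injective_of_inv _ _ (mul_eq_one_comm.1 hinv) (by simp [hcomm.2.2])
  have hdet : Complex.normSq A.det * d 0 0 = 1 := by
    have h : (soMatrix g).det = 1 := mem_SOgrp.1 g.2
    simpa [← hB, det_realify] using h
  have hsq : d 0 0 * d 0 0 = 1 := by
    have h := congrFun₂ (transpose_soMatrix_mul_self g)
      (embedUIndex k (.inr 0)) (embedUIndex k (.inr 0))
    rw [mul_apply, ← (embedUIndex k).sum_comp] at h
    simpa [← hB] using h
  obtain rfl : d = 1 := by
    have hd : d 0 0 = 1 := (mul_self_eq_one_iff.1 hsq).resolve_right fun h => by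
      linarith [h ▸ hdet, Complex.normSq_nonneg A.det]
    ext i j
    rwa [Subsingleton.elim i 0, Subsingleton.elim j 0, one_apply_eq]
  exact ⟨A, (embedU_eq_reindex A).trans hB⟩

theorem mem_UinSO_iff {g : SOgrp (2 * k + 1)} :
    g ∈ UinSO k ↔ Commute (soMatrix g) (complexStructure (2 * k + 1)) := by
  rw [UinSO_eq_range]
  constructor
  · rintro ⟨A, rfl⟩
    change embedU k A * _ = _ * embedU k A
    have h := (exists_realify_eq_iff.1 ⟨A.1, rfl⟩).eq
    simp [embedU_eq_reindex, complexStructure_eq_reindex, submatrix_mul_equiv,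
      fromBlocks_multiply, h]
  · intro h
    obtain ⟨A, hA⟩ := soMatrix_mem_range_embedU h
    exact ⟨⟨A, embedU_mem_orthogonalGroup_iff.1 (hA ▸ g.1.2)⟩, soMatrix_injective hA⟩

end Realification

section UnitaryStabilizer

open Matrix

variable {k : ℕ}

theorem exists_unitaryGroup_col_eq {m 𝕜 : Type*} [Fintype m] [DecidableEq m] [RCLike 𝕜] (i : m)
    {c : EuclideanSpace 𝕜 m} (hc : ‖c‖ = 1) : ∃ A : unitaryGroup m 𝕜, A.1.col i = c := by
  obtain ⟨b, hb⟩ := Orthonormal.exists_orthonormalBasis_extension_of_card_eq (𝕜 := 𝕜)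
    (finrank_euclideanSpace (ι := m)) (v := fun _ => c) (s := {i})
    ⟨fun _ => hc, fun _ _ h => (h (Subsingleton.elim _ _)).elim⟩
  let f := (EuclideanSpace.basisFun m 𝕜).equiv b (Equiv.refl m)
  refine ⟨(unitaryGroupEquiv m 𝕜).symm f, ?_⟩
  have hf : unitaryGroupEquiv m 𝕜 ((unitaryGroupEquiv m 𝕜).symm f) (EuclideanSpace.single i 1) =
      c := by
    rw [MulEquiv.apply_symm_apply, ← EuclideanSpace.basisFun_apply,
      OrthonormalBasis.equiv_apply_basis, Equiv.refl_apply, hb i rfl]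
  rw [← mulVec_single_one]
  exact congrArg WithLp.ofLp hf

theorem exists_soOfUnitary_smul_single_eq (i : Fin k) {y : EuclideanSpace ℝ (Fin (2 * k + 1))}
    (hy : ‖y‖ = 1) (hlast : y (embedUIndex k (.inr 0)) = 0) :
    ∃ A, soOfUnitary k A • EuclideanSpace.single (embedUIndex k (.inl (i, 1))) (1 : ℝ) = y := by
  let c : EuclideanSpace ℂ (Fin k) := WithLp.toLp 2 fun j =>
    ⟨y (embedUIndex k (.inl (j, 1))), -y (embedUIndex k (.inl (j, 0)))⟩
  have hc : ‖c‖ = 1 := by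
    rw [← sq_eq_sq₀ (norm_nonneg _) zero_le_one, ← hy, EuclideanSpace.norm_sq_eq,
      EuclideanSpace.norm_sq_eq, ← (embedUIndex k).sum_comp]
    simp only [Fintype.sum_sum_type, Fintype.sum_prod_type, Fin.sum_univ_two, Fin.sum_univ_one,
      hlast, Complex.sq_norm, Complex.normSq_apply, Real.norm_eq_abs, sq_abs, c]
    simp only [zero_pow two_ne_zero, zero_add, ← sq, neg_sq, add_comm]
  obtain ⟨A, hA⟩ := exists_unitaryGroup_col_eq i hc
  refine ⟨A, PiLp.ext fun p => ?_⟩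
  rw [← soMatrix_apply]
  change embedU k A _ _ = _
  rw [embedU_eq_reindex]
  obtain ⟨p, rfl⟩ := (embedUIndex k).surjective p
  have hAj (j : Fin k) : A.1 j i = c j := congrFun hA j
  rcases p with ⟨j, a⟩ | p
  · fin_cases a <;> simp [realify, hAj, c]
  · simp [Subsingleton.elim p 0, hlast]

/-- The last basis vector of `ℝ^(2k+1)`, which is fixed by `U(k)`. -/
def pole (k : ℕ) : EuclideanSpace ℝ (Fin (2 * k + 1)) :=
  EuclideanSpace.single (Fin.last (2 * k)) 1

theorem norm_pole : ‖pole k‖ = 1 := by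
  simp [pole]

theorem embedUIndex_inr (a : Fin 1) : embedUIndex k (.inr a) = Fin.last (2 * k) :=
  Fin.ext (val_embedUIndex_inr a)

theorem embedUIndex_inl_last_one : embedUIndex (k + 1) (.inl (Fin.last k, 1)) =
    Fin.natAdd (2 * k + 1) (0 : Fin 2) :=
  Fin.ext (by simp [add_comm])

theorem smul_pole_of_mem_UinSO {g : SOgrp (2 * k + 1)} (hg : g ∈ UinSO k) :
    g • pole k = pole k := by
  rw [UinSO_eq_range] at hg
  obtain ⟨A, rfl⟩ := hg
  rw [pole, ← col_soMatrix_eq_single_iff, ← embedUIndex_inr 0]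
  ext p
  obtain ⟨p, rfl⟩ := (embedUIndex k).surjective p
  change embedU k A _ _ = _
  rw [embedU_eq_reindex]
  rcases p with p | p <;> simp [Pi.single_apply, one_apply]

theorem isClosed_UinSO : IsClosed (UinSO k : Set (SOgrp (2 * k + 1))) := by
  have : (UinSO k : Set (SOgrp (2 * k + 1))) =
      {g | soMatrix g * complexStructure (2 * k + 1) = complexStructure (2 * k + 1) * soMatrix g} :=
    Set.ext fun g => mem_UinSO_iff
  rw [this]
  exact isClosed_eq (by fun_prop) (by fun_prop)

theorem complexStructure_add_two (k : ℕ) : complexStructure (2 * k + 1 + 2) =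
    reindex finSumFinEquiv finSumFinEquiv (fromBlocks (complexStructure (2 * k + 1))
      (-vecMulVec (pole k) (Pi.single 0 1)) (vecMulVec (Pi.single 0 1) (pole k)) 0) := by
  ext p q
  obtain ⟨p, rfl⟩ := finSumFinEquiv.surjective p
  obtain ⟨q, rfl⟩ := finSumFinEquiv.surjective q
  rcases p with p | p <;> rcases q with q | q
  · simp [complexStructure]
  · fin_cases q <;>
      simp [complexStructure, vecMulVec_apply, pole, Pi.single_apply, Fin.ext_iff] <;> grind
  · fin_cases p <;>
      simp [complexStructure, vecMulVec_apply, pole, Pi.single_apply, Fin.ext_iff] <;> grind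
  · fin_cases p <;> fin_cases q <;> simp [complexStructure] <;> grind

theorem soIncl_mem_UinSO_iff {g : SOgrp (2 * k + 1)} :
    soIncl (2 * k + 1) g ∈ UinSO (k + 1) ↔ g ∈ UinSO k := by
  have hmem : soIncl (2 * k + 1) g ∈ UinSO (k + 1) ↔
      Commute (blockIncl (soMatrix g)) (complexStructure (2 * k + 1 + 2)) := mem_UinSO_iff
  rw [hmem, complexStructure_add_two, blockIncl, ← coe_reindexAlgEquiv ℝ ℝ,
    commute_map_iff (AlgEquiv.injective _), Commute, SemiconjBy, fromBlocks_multiply,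
    fromBlocks_multiply, fromBlocks_inj, mem_UinSO_iff]
  refine ⟨fun h => by simpa [commute_iff_eq] using h.1, fun h => ?_⟩
  have hg : soMatrix g *ᵥ pole k = pole k :=
    congrArg WithLp.ofLp (smul_pole_of_mem_UinSO (mem_UinSO_iff.2 h))
  have hg' : pole k ᵥ* soMatrix g = pole k := by
    rw [← mulVec_transpose]
    exact congrArg WithLp.ofLp (smul_pole_of_mem_UinSO (inv_mem (mem_UinSO_iff.2 h)))
  simp [h.eq, mul_vecMulVec (soMatrix g), vecMulVec_mul _ _ (soMatrix g), hg, hg']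

theorem exists_mul_eq_soIncl {g : SOgrp (2 * k + 1 + 2)} (hg : g • pole (k + 1) = pole (k + 1)) :
    ∃ a ∈ UinSO (k + 1), ∃ h, soIncl (2 * k + 1) h = g * a := by
  let e : EuclideanSpace ℝ (Fin (2 * k + 1 + 2)) :=
    EuclideanSpace.single (Fin.natAdd (2 * k + 1) 0) 1
  have hlast : (g⁻¹ • e) (embedUIndex (k + 1) (.inr 0)) = 0 := by
    rw [← soMatrix_apply, embedUIndex_inr, soMatrix_inv, transpose_apply, soMatrix_apply]
    change (g • pole (k + 1)) _ = 0
    rw [hg]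
    simp [pole, Fin.ext_iff]
    omega
  obtain ⟨A, hA⟩ := exists_soOfUnitary_smul_single_eq (Fin.last k) (y := g⁻¹ • e)
    (by simp [e]) hlast
  rw [embedUIndex_inl_last_one] at hA
  have hA_mem : soOfUnitary (k + 1) A ∈ UinSO (k + 1) := UinSO_eq_range ▸ ⟨A, rfl⟩
  have hfix : g * soOfUnitary (k + 1) A ∈ (soIncl (2 * k + 1)).range := by
    rw [mem_range_soIncl_iff, Fin.forall_fin_two]
    constructor
    · exact (mul_smul _ _ _).trans ((congrArg (g • ·) hA).trans (smul_inv_smul g e))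
    · change (g * soOfUnitary (k + 1) A) • pole (k + 1) = pole (k + 1)
      rw [mul_smul, smul_pole_of_mem_UinSO hA_mem, hg]
  obtain ⟨h, hh⟩ := hfix
  exact ⟨_, hA_mem, h, hh⟩

end UnitaryStabilizer

section HomogeneousSpace

open Topology

variable {k : ℕ}

instance : CompactSpace (SOmodU k) :=
  inferInstanceAs (CompactSpace (SOgrp (2 * k + 1) ⧸ UinSO k))

instance : SMul (SOgrp (2 * k + 1)) (SOmodU k) :=
  (MulAction.quotient (SOgrp (2 * k + 1)) (UinSO k)).toSMul

instance : MulAction (SOgrp (2 * k + 1)) (SOmodU k) :=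
  MulAction.quotient (SOgrp (2 * k + 1)) (UinSO k)

instance : ContinuousSMul (SOgrp (2 * k + 1)) (SOmodU k) :=
  QuotientGroup.instContinuousSMul (N := UinSO k)

/-- The projection `SO(2k+1) → SO(2k+1)/U(k)`. -/
def SOmodU.mk (g : SOgrp (2 * k + 1)) : SOmodU k := QuotientGroup.mk g

theorem SOmodU.isOpenQuotientMap_mk : IsOpenQuotientMap (SOmodU.mk (k := k)) :=
  QuotientGroup.isOpenQuotientMap_mk

theorem SOmodU.mk_eq_mk {g h : SOgrp (2 * k + 1)} :
    SOmodU.mk g = SOmodU.mk h ↔ g⁻¹ * h ∈ UinSO k := QuotientGroup.eq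

@[elab_as_elim]
theorem SOmodU.ind {p : SOmodU k → Prop} (h : ∀ g, p (SOmodU.mk g)) (x : SOmodU k) : p x :=
  Quotient.inductionOn' x h

instance : T2Space (SOmodU k) := by
  rw [t2Space_iff_of_isOpenQuotientMap SOmodU.isOpenQuotientMap_mk]
  simp only [SOmodU.mk_eq_mk]
  exact isClosed_UinSO.preimage (by fun_prop : Continuous
    fun q : SOgrp (2 * k + 1) × SOgrp (2 * k + 1) => q.1⁻¹ * q.2)

/-- The projection `SO(2k+1)/U(k) → S²ᵏ`, `[g] ↦ g • e` for the last basis vector `e`. -/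
def SOmodU.proj : C(SOmodU k, EuclideanSpace ℝ (Fin (2 * k + 1))) where
  toFun x := Quotient.liftOn' x (· • pole k) fun _ _ hgh =>
    (inv_smul_eq_iff.1 ((mul_smul _ _ _).symm.trans
      (smul_pole_of_mem_UinSO (QuotientGroup.leftRel_apply.1 hgh)))).symm
  continuous_toFun := SOmodU.isOpenQuotientMap_mk.continuous_comp_iff.1
    (continuous_id.smul continuous_const)

theorem SOmodU.proj_mk (g : SOgrp (2 * k + 1)) : proj (mk g) = g • pole k := rfl

theorem SOmodU.proj_smul (g : SOgrp (2 * k + 1)) (x : SOmodU k) : proj (g • x) = g • proj x := by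
  induction x using SOmodU.ind with | h h => exact mul_smul g h (pole k)

theorem SOmodU.norm_proj (x : SOmodU k) : ‖proj x‖ = 1 := by
  induction x using SOmodU.ind with | h g => rw [proj_mk, SOgrp.norm_smul, norm_pole]

/-- The natural inclusion `SO(2k+1)/U(k) → SO(2k+3)/U(k+1)`. -/
def SOmodU.incl : C(SOmodU k, SOmodU (k + 1)) where
  toFun x := Quotient.liftOn' x (fun g => mk (soIncl (2 * k + 1) g)) fun g h hgh => by
    rw [mk_eq_mk, ← map_inv, ← map_mul, soIncl_mem_UinSO_iff]
    exact QuotientGroup.leftRel_apply.1 hgh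
  continuous_toFun := isOpenQuotientMap_mk.continuous_comp_iff.1
    (isOpenQuotientMap_mk.continuous.comp continuous_soIncl)

theorem SOmodU.incl_mk (g : SOgrp (2 * k + 1)) : incl (mk g) = mk (soIncl (2 * k + 1) g) := rfl

theorem SOmodU.incl_injective : Function.Injective (incl (k := k)) := fun x y h => by
  induction x using SOmodU.ind with | h g =>
  induction y using SOmodU.ind with | h g' =>
  rwa [incl_mk, incl_mk, mk_eq_mk, ← map_inv, ← map_mul, soIncl_mem_UinSO_iff, ← mk_eq_mk] at h

theorem SOmodU.isEmbedding_incl : IsEmbedding (incl (k := k)) :=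
  (incl.continuous.isClosedEmbedding incl_injective).isEmbedding

theorem SOmodU.mem_range_incl_iff {x : SOmodU (k + 1)} :
    x ∈ Set.range (incl (k := k)) ↔ proj x = pole (k + 1) := by
  induction x using SOmodU.ind with | h g
  rw [proj_mk]
  constructor
  · rintro ⟨y, hy⟩
    rw [← proj_mk, ← hy]
    induction y using SOmodU.ind with | h g'
    exact mem_range_soIncl_iff.1 ⟨g', rfl⟩ 1
  · intro hg
    obtain ⟨a, ha, h, hh⟩ := exists_mul_eq_soIncl hg
    refine ⟨mk h, (mk_eq_mk.2 ?_).symm⟩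
    rwa [hh, inv_mul_cancel_left]

theorem SOmodU.compressesMapsFrom_incl {X : Type*} [MetricSpace X] [CompactSpace X]
    (hX : dimH (Set.univ : Set X) < (2 * (k + 1) : ℕ)) : CompressesMapsFrom X (incl (k := k)) := by
  intro v
  have hrank : Module.finrank ℝ (ℝ ∙ pole (k + 1))ᗮ = 2 * (k + 1) :=
    have : Fact (Module.finrank ℝ (EuclideanSpace ℝ (Fin (2 * (k + 1) + 1))) = 2 * (k + 1) + 1) :=
      ⟨finrank_euclideanSpace_fin⟩
    Submodule.finrank_orthogonal_span_singleton (norm_ne_zero_iff.1 (by simp [norm_pole]))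
  obtain ⟨v', hv', hvv'⟩ := exists_homotopicRel_comp_eq_const SOmodU.proj_smul SOmodU.norm_proj
    (norm_pole (k := k + 1)) (by rwa [hrank]) v
  choose L hL using fun x => mem_range_incl_iff.2 (hv' x)
  have hLcont : Continuous L := isEmbedding_incl.continuous_iff.2 (by
    simpa only [Function.comp_def, hL] using v'.continuous)
  have : v' = incl.comp ⟨L, hLcont⟩ := ContinuousMap.ext fun x => (hL x).symm
  refine ⟨⟨L, hLcont⟩, this ▸ ?_⟩
  convert hvv' using 1
  exact Set.ext fun x => mem_range_incl_iff

end HomogeneousSpace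

open scoped unitInterval

theorem stmt_10_general (k : ℕ) {X : Type*} [MetricSpace X] [CompactSpace X]
    (hX : dimH (Set.univ : Set (I × X)) < (2 * (k + 1) : ℕ)) (x₀ : X) :
    ∃ f : C(SOmodU k, SOmodU (k + 1)),
      (∀ (g : SOgrp (2 * k + 1)) (g' : SOgrp (2 * (k + 1) + 1)),
          ((g' : ↥(Matrix.orthogonalGroup (Fin (2 * (k + 1) + 1)) ℝ)) :
              Matrix (Fin (2 * (k + 1) + 1)) (Fin (2 * (k + 1) + 1)) ℝ)
            = blockIncl ((g : ↥(Matrix.orthogonalGroup (Fin (2 * k + 1)) ℝ)) :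
              Matrix (Fin (2 * k + 1)) (Fin (2 * k + 1)) ℝ) →
          f (QuotientGroup.mk g) = QuotientGroup.mk g') ∧
      f (QuotientGroup.mk 1) = QuotientGroup.mk 1 ∧
      (∀ v : C(X, SOmodU (k + 1)), v x₀ = QuotientGroup.mk 1 →
        ∃ u : C(X, SOmodU k), u x₀ = QuotientGroup.mk 1 ∧
          ContinuousMap.HomotopicRel (f.comp u) v {x₀}) ∧
      (∀ u₁ u₂ : C(X, SOmodU k), u₁ x₀ = QuotientGroup.mk 1 → u₂ x₀ = QuotientGroup.mk 1 →
        ContinuousMap.HomotopicRel (f.comp u₁) (f.comp u₂) {x₀} →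
        ContinuousMap.HomotopicRel u₁ u₂ {x₀}) := by
  have hX' : dimH (Set.univ : Set X) < (2 * (k + 1) : ℕ) :=
    (dimH_univ_le_dimH_univ_unitInterval_prod X).trans_lt hX
  have hone : SOmodU.incl (SOmodU.mk (1 : SOgrp (2 * k + 1))) = SOmodU.mk 1 := by
    rw [SOmodU.incl_mk, map_one]
  refine ⟨SOmodU.incl, fun g g' hg => ?_, hone, fun v hv => ?_, fun u₁ u₂ _ _ hu => ?_⟩
  · have : g' = soIncl (2 * k + 1) g := soMatrix_injective hg
    exact this ▸ SOmodU.incl_mk g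
  · exact (SOmodU.compressesMapsFrom_incl hX').exists_homotopicRel SOmodU.incl_injective
      (hv.trans hone.symm)
  · exact (SOmodU.compressesMapsFrom_incl hX).homotopicRel_of_comp SOmodU.incl_injective hu

/-- writing `n = k + 1`, for `j < 2k + 1 = 2n − 1` the natural inclusion
`SO(2n−1)/U(n−1) → SO(2n+1)/U(n)` (induced by the block inclusions
`SO(2k+1) ⊂ SO(2k+3)`, `U(k) ⊂ U(k+1)`) induces an isomorphism on `π_j`: there is a
continuous map between the homogeneous spaces, commuting with the projections and the
block inclusion, which is bijective (in the rel-basepoint homotopy category) on based maps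
from the `j`-sphere. -/
theorem stmt_10 (k j : ℕ) (hj : j < 2 * k + 1)
    (S : Set (EuclideanSpace ℝ (Fin (j + 1))))
    (hS : S = Metric.sphere (0 : EuclideanSpace ℝ (Fin (j + 1))) 1)
    (s₀ : S) :
    ∃ f : C(SOmodU k, SOmodU (k + 1)),
      -- `f` is induced by the block inclusion `SO(2k+1) → SO(2k+3)`:
      (∀ (g : SOgrp (2 * k + 1)) (g' : SOgrp (2 * (k + 1) + 1)),
          ((g' : ↥(Matrix.orthogonalGroup (Fin (2 * (k + 1) + 1)) ℝ)) :
              Matrix (Fin (2 * (k + 1) + 1)) (Fin (2 * (k + 1) + 1)) ℝ)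
            = blockIncl ((g : ↥(Matrix.orthogonalGroup (Fin (2 * k + 1)) ℝ)) :
              Matrix (Fin (2 * k + 1)) (Fin (2 * k + 1)) ℝ) →
          f (QuotientGroup.mk g) = QuotientGroup.mk g') ∧
      -- `f` maps the basepoint to the basepoint:
      f (QuotientGroup.mk 1) = QuotientGroup.mk 1 ∧
      -- surjectivity of `π_j (f)`:
      (∀ v : C(S, SOmodU (k + 1)), v s₀ = QuotientGroup.mk 1 →
        ∃ u : C(S, SOmodU k), u s₀ = QuotientGroup.mk 1 ∧
          ContinuousMap.HomotopicRel (f.comp u) v {s₀}) ∧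
      -- injectivity of `π_j (f)`:
      (∀ u₁ u₂ : C(S, SOmodU k), u₁ s₀ = QuotientGroup.mk 1 → u₂ s₀ = QuotientGroup.mk 1 →
        ContinuousMap.HomotopicRel (f.comp u₁) (f.comp u₂) {s₀} →
        ContinuousMap.HomotopicRel u₁ u₂ {s₀}) := by
  subst hS
  have hdim := dimH_univ_unitInterval_prod_sphere_lt (n := j + 1) (m := 2 * (k + 1)) (by omega)
  exact stmt_10_general k hdim s₀
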